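/- Let q = 2^5 = 32 and let ∘ denote the symplectic Knuth presemifield multiplication on F_32 (with n = 5). Then there is no F_2-linear bijection f : F_32 → F_32 such that for every nonzero a ∈ F_32 the set {x ∈ F_32 : f(x) + x ∘ a = 0} has exactly 2 elements. (Equivalently, the symplectic presemifield plane Π(K_5^{td}) contains no translation hyperoval of type (a), i.e., no translation hyperoval whose carrier points are (0) and (∞).) -/

import Mathlib

/-! ### Kernel-friendly search -/

/-- Evaluate a natural number before passing it on. -/
noncomputable def force (n : ℕ) (k : ℕ → Bool) : Bool :=
  Nat.rec (k 0) (fun m _ => k (Nat.succ m)) n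

/-- Multiplication by the root of `X^5+X^2+1`. -/
def mulX (n : ℕ) : ℕ := bif Nat.ble 16 n then Nat.xor (Nat.mul 2 n) 37 else Nat.mul 2 n

/-- `bit y i x` is `x` if bit `i` of `y` is set and zero otherwise. -/
def bitMul (y i x : ℕ) : ℕ := Nat.mul (Nat.mod (Nat.shiftRight y i) 2) x

def mulN (x y : ℕ) : ℕ :=
  Nat.xor (bitMul y 0 x) (Nat.xor (bitMul y 1 (mulX x)) (Nat.xor (bitMul y 2 (mulX (mulX x)))
    (Nat.xor (bitMul y 3 (mulX (mulX (mulX x)))) (bitMul y 4 (mulX (mulX (mulX (mulX x))))))))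

def sqN (n : ℕ) : ℕ := Nat.mod (Nat.shiftRight 850225758731225616148925150155573904376942727200 (Nat.mul 5 n)) 32

def rootN (n : ℕ) : ℕ := Nat.mod (Nat.shiftRight 705982243263720410628782754300069809019673209888 (Nat.mul 5 n)) 32

def trN (n : ℕ) : ℕ := Nat.mod (Nat.shiftRight 1437226410 n) 2

/-- The presemifield multiplication on five-bit numbers. -/
def opN (x y : ℕ) : ℕ :=
  Nat.xor (Nat.xor (mulN x y) (Nat.mul (trN x) (rootN y))) (trN (mulN (sqN x) y))

def onesC : ℕ := 41855804977958881238216860293671333616475814839523861211015363775367857790754367812411590743534994955327154331653972084008334635948471552329445020986934924815945052132199177846429263578652254701150892687317891618273230805205109921907778604060552511649183701335864607145965996450848344889395800702977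
def lowC : ℕ := 179769313486231590772930519078902473361797697894230657273430081157732675805500963132708477322407536021120113879871393357658789768814416622492847430639474124377767893424865485276302219601246094119453082952085005768838150682342462881473913110540827237163350510684586298239947245938479716304835356329624224137215
def nkC : ℕ := 89884656722187892897485818920342806534063182138877421216953109973358656015066552670977054754997972638792559462272119513002408842403040993272187939155014551695416484304460216572051520877408415270400414125467056540760129532034616038134401594316524316551398999517701298452041319396256859926993505720114211717119
def kC : ℕ := 89884656764043697875444700158559666827734515755353236056476971184374019790434410461731422567409563382327554417599273844656380926411375629220659491484459572682351409120405268704250698723837678849052668826617949228078021150307846843339511516224302920611951511166884999787905926542222856377841850609510012420096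
def mC0 : ℕ := 7524389322797446040883062092537733229786709286255942365591042456667314442386984930096710212860769417795340657030827683038844698134727362301284631268392235937583875243951827485067390432889168540459798904583851961347493402961438138317409892571406969311454956545629852567160903318873644454808418626039175260691609949036049282500668357192980174976837821551246685093927923721588007749784843196246171229662840693970933302712516988312146012401244517765743466989949769396632294237631961231141629598705401114366081875798891955552658541527505604808849729680814712227957530391280469301474478369841928076546552539119615
def mC1 : ℕ := 1751908409537131537125538500170898456289982643253648994597171622084866540056922972656596711067189883143022427928261387198048309577447708096161081508699543188141910799902361070622401213741372869165576561922289064005031441460299875909588734720986560192536021217458484325625391881476254406473079046653046818198811063732807766626815778669059263539288279240724043002972198751108816706724514596508072044707863500473414019828271440565021291938453587422416281612723545945938909968678247193364858445334012215555435275427943811594957345986593699556195903066794743184472440265626440142038293478191736570249215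
def mC2 : ℕ := 94971145180789141405469863695884969990413375523057264366393133656667101213790966126577778796192435976493286721619611273819053280153830754471864219391289063009512806159964370817305614238014244837688992683186106238684767551483551350234458097273324874897360483666819816039560925245068139788358907078031552764684530246952389718316880392918374272991258975094057996680343827463235688502168934277549034830891396697676020193061348779341148892066948388025097854535507810266613457395028123006836137017554784880056507653590091639305530513408919664906739868441072650790136656884348974268415
def mC3 : ℕ := 279095111627852376407822673918065072905887935345660252615989519488029661278602584477274180335287279405243496479269655964121202716886217624945655141584838007703178109579584255207605922065345056860944776274180728348556737279454388833698212982515973506422648097610271573739270676850754346538118912161587565627322601608861055814126836611515444383335727234678394072087732734025567668896419351136825388822676270715092663370710364205902957257037840983601227613820869153236869843656264309782139126643440567491781248474770930966086857614467652386815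
def mC4 : ℕ := 2410312426921032588580116606028314112912093247945688951359675039065257391591803200669085024107346049663448766280888004787862416978794958324969612987890774471685899853150034451840262999015208137879147648906730546627516188125228793608498254413622185557461794521228420806236115696491848613995171671120355230896257999149258109674668529734341363050113939500588541302086847006769686052748707136868564708653190246324172185170594217116133658727496874721447108785121263615

/-- Exchange the blocks of `s` bits selected by `M` with their right neighbours. -/
def swapB (M s N : ℕ) : ℕ :=
  Nat.lor (Nat.shiftLeft (Nat.land N M) s) (Nat.land (Nat.shiftRight N s) M)

noncomputable def condSwap (u k M s N : ℕ) (c : ℕ → Bool) : Bool :=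
  bif Nat.beq (Nat.mod (Nat.shiftRight u k) 2) 0 then c N else force (swapB M s N) c

/-- Permute the lanes of `N` by `v ↦ v xor u`. -/
noncomputable def perm (u N : ℕ) (c : ℕ → Bool) : Bool :=
  condSwap u 0 mC0 32 N fun N => condSwap u 1 mC1 64 N fun N => condSwap u 2 mC2 128 N fun N =>
    condSwap u 3 mC3 256 N fun N => condSwap u 4 mC4 512 N c

def mark (bc N : ℕ) : ℕ := Nat.lor N (Nat.shiftLeft (Nat.land N bc) 1024)

def merge (N p : ℕ) : ℕ :=
  Nat.lor (Nat.lor N p) (Nat.shiftLeft (Nat.land (Nat.land N p) lowC) 1024)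

def deadB (N : ℕ) : ℕ := Nat.land (Nat.add (Nat.land (Nat.shiftRight N 1024) nkC) nkC) kC

/-- Continue with `N` unless all lanes are dead. -/
noncomputable def prune (N : ℕ) (c : ℕ → Bool) : Bool :=
  force N fun N => bif Nat.beq (deadB N) kC then true else c N

noncomputable def mergeL (u bc : ℕ) : List ℕ → (List ℕ → Bool) → Bool
  | [], c => c []
  | [_], _ => false
  | N :: N' :: L, c => prune (mark bc N) fun N => perm u N' fun p => force (mark bc p) fun p =>
      prune (merge N p) fun n => mergeL u bc L fun R => c (n :: R)

/-- The position of the lowest lane in `live`. -/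
def laneOf (live : ℕ) : ℕ :=
  Nat.mod (Nat.shiftRight 57709218897076503582894278637149109849761360302611950103980710668120564464320916572767167806701568
    (Nat.mul 5 (Nat.mod (Nat.sub live (Nat.land live (Nat.sub live 1))) 67))) 32

/-- Add a tag to a set of lanes, so that the low bits distinguish these sets. -/
def tagged (live : ℕ) : ℕ := Nat.lor live (Nat.mod live 2147483647)

noncomputable def loop (P : ℕ → Bool) (fuel : ℕ) : ℕ → Bool :=
  Nat.rec (motive := fun _ => ℕ → Bool) (fun _ => false)
    (fun _ ih live => bif Nat.beq (Nat.shiftRight live 31) 0 then true else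
      force (laneOf (Nat.shiftRight live 31)) fun u =>
        bif P u then force (Nat.xor live (Nat.pow 2 (Nat.add (Nat.mul 32 u) 31))) ih
        else false) fuel

noncomputable def branch (N : ℕ) (L : List ℕ) (c : List ℕ → Bool) (u : ℕ) : Bool :=
  force (Nat.mul (Nat.mod (Nat.shiftRight N (Nat.mul 32 u)) 4294967296) onesC) fun bc => mergeL u bc L c

noncomputable def search (fuel : ℕ) : List ℕ → Bool :=
  Nat.rec (motive := fun _ => List ℕ → Bool) (fun _ => false)
    (fun _ ih L => List.rec (motive := fun _ => Bool) false (fun N L _ =>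
      force (tagged (Nat.xor (deadB N) kC)) fun live => loop (branch N L ih) 33 live) L) fuel

/-- The row of `x`: bits `32 * (x ∘ a) + (a - 1)`, and lane `0` is dead. -/
def row (x : ℕ) : ℕ → ℕ
  | 0 => Nat.pow 2 1024
  | n + 1 => Nat.lor (row x n) (Nat.pow 2 (Nat.add (Nat.mul 32 (opN x (Nat.succ n))) n))

noncomputable def rows : List ℕ → (List ℕ → Bool) → Bool
  | [], c => c []
  | x :: L, c => force (row x 31) fun N => rows L fun R => c (N :: R)

def liveC : ℕ := 89884656764043697870572043151725163420616156575272100566390801297956841190528585347967951344444108232774576677503648720679893818340536991600290454320982389417219838455876097509252218460656884163117654753154394099307396522552331984584539176741210718593292918323627427379134314051070383288408887241118555570176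

noncomputable def top (n live : ℕ) : List ℕ → Bool
  | [] => false
  | N :: L => loop (branch N L (search n)) 33 live

set_option maxRecDepth 100000 in
theorem top_true : rows [1, 2, 3, 4, 5, 6, 7, 8, 9, 10, 11, 12, 13, 14, 15, 16, 17, 18, 19, 20, 21, 22, 23, 24, 25, 26, 27, 28, 29, 30, 31] (top 4 liveC) = true := by
  decide +kernel

/-! ### Soundness of the search -/

theorem force_eq (n : ℕ) (k : ℕ → Bool) : force n k = k n := by
  cases n <;> rfl

theorem mC_ok : ∀ j < 2048, (mC0.testBit j = true → j ^^^ 32 = j + 32) ∧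
    (mC1.testBit j = true → j ^^^ 64 = j + 64) ∧ (mC2.testBit j = true → j ^^^ 128 = j + 128) ∧
    (mC3.testBit j = true → j ^^^ 256 = j + 256) ∧
    (mC4.testBit j = true → j ^^^ 512 = j + 512) := by
  decide +kernel

theorem lt_of_bit {M j : ℕ} (hM : M < 2 ^ 2048) (h : M.testBit j = true) : j < 2048 := by
  by_contra hj
  have h2 : M < 2 ^ j := lt_of_lt_of_le hM (Nat.pow_le_pow_right (by norm_num) (by omega))
  rw [Nat.testBit_lt_two_pow h2] at h
  exact absurd h (by simp)

theorem swapB_bit {M s N i : ℕ} (hM : ∀ j, M.testBit j = true → j ^^^ s = j + s)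
    (h : (swapB M s N).testBit i = true) : N.testBit (i ^^^ s) = true := by
  have e : swapB M s N = ((N &&& M) <<< s) ||| ((N >>> s) &&& M) := rfl
  rw [e] at h
  simp only [Nat.testBit_or, Nat.testBit_and, Nat.testBit_shiftLeft, Nat.testBit_shiftRight,
    Bool.or_eq_true, Bool.and_eq_true, decide_eq_true_eq] at h
  rcases h with ⟨h1, h2, h3⟩ | ⟨h1, h2⟩
  · have h4 := hM _ h3
    have h5 : i = (i - s) ^^^ s := by rw [h4]; omega
    have h6 : i ^^^ s = i - s := by
      conv_lhs => rw [h5]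
      rw [Nat.xor_assoc, Nat.xor_self, Nat.xor_zero]
    rw [h6]; exact h2
  · rw [hM _ h2, Nat.add_comm]; exact h1

def sel (u k s : ℕ) : ℕ := bif Nat.beq (Nat.mod (Nat.shiftRight u k) 2) 0 then 0 else s

theorem condSwap_sound {u k M s N : ℕ} {c : ℕ → Bool}
    (hM : ∀ j, M.testBit j = true → j ^^^ s = j + s) (h : condSwap u k M s N c = true) :
    ∃ p, (∀ i, p.testBit i = true → N.testBit (i ^^^ sel u k s) = true) ∧ c p = true := by
  unfold condSwap at h
  unfold sel
  cases hb : Nat.beq (Nat.mod (Nat.shiftRight u k) 2) 0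
  · rw [hb, cond_false, force_eq] at h
    exact ⟨_, fun i hi => swapB_bit hM hi, h⟩
  · rw [hb, cond_true] at h
    exact ⟨N, fun i hi => by simpa using hi, h⟩

theorem sel_ok : ∀ u < 32, sel u 4 512 ^^^ (sel u 3 256 ^^^ (sel u 2 128 ^^^
    (sel u 1 64 ^^^ sel u 0 32))) = 32 * u := by
  decide +kernel

theorem perm_sound {u N : ℕ} {c : ℕ → Bool} (hu : u < 32) (h : perm u N c = true) :
    ∃ p, (∀ i, p.testBit i = true → N.testBit (i ^^^ (32 * u)) = true) ∧ c p = true := by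
  unfold perm at h
  have b0 : mC0 < 2 ^ 2048 := by decide +kernel
  have b1 : mC1 < 2 ^ 2048 := by decide +kernel
  have b2 : mC2 < 2 ^ 2048 := by decide +kernel
  have b3 : mC3 < 2 ^ 2048 := by decide +kernel
  have b4 : mC4 < 2 ^ 2048 := by decide +kernel
  obtain ⟨p0, h0, h⟩ := condSwap_sound (fun j hj => (mC_ok j (lt_of_bit b0 hj)).1 hj) h
  obtain ⟨p1, h1, h⟩ := condSwap_sound (fun j hj => (mC_ok j (lt_of_bit b1 hj)).2.1 hj) h
  obtain ⟨p2, h2, h⟩ := condSwap_sound (fun j hj => (mC_ok j (lt_of_bit b2 hj)).2.2.1 hj) h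
  obtain ⟨p3, h3, h⟩ := condSwap_sound (fun j hj => (mC_ok j (lt_of_bit b3 hj)).2.2.2.1 hj) h
  obtain ⟨p4, h4, h⟩ := condSwap_sound (fun j hj => (mC_ok j (lt_of_bit b4 hj)).2.2.2.2 hj) h
  refine ⟨p4, fun i hi => ?_, h⟩
  have := h0 _ (h1 _ (h2 _ (h3 _ (h4 _ hi))))
  rw [← sel_ok u hu]
  simpa only [Nat.xor_assoc] using this

theorem prune_sound {N : ℕ} {c : ℕ → Bool} (h : prune N c = true) :
    deadB N = kC ∨ c N = true := by
  unfold prune at h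
  rw [force_eq] at h
  cases hb : Nat.beq (deadB N) kC
  · rw [hb, cond_false] at h; exact Or.inr h
  · exact Or.inl (Nat.eq_of_beq_eq_true hb)

/-- `n` lanes with value `c` each. -/
def lanes (c : ℕ) : ℕ → ℕ
  | 0 => 0
  | n + 1 => 2 ^ 32 * lanes c n + c

theorem lanes_mul_bit {m : ℕ} (hm : m < 2 ^ 32) (n i : ℕ)
    (h : (m * lanes 1 n).testBit i = true) : m.testBit (i % 32) = true := by
  induction n generalizing i with
  | zero => simp [lanes] at h
  | succ n ih =>
    have e : m * lanes 1 (n + 1) = 2 ^ 32 * (m * lanes 1 n) + m := by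
      simp only [lanes]; ring
    rw [e, Nat.testBit_two_pow_mul_add _ hm] at h
    split_ifs at h with hi
    · rwa [Nat.mod_eq_of_lt hi]
    · have := ih _ h
      rwa [← Nat.mod_eq_sub_mod (by omega)] at this

theorem lane_add {n : ℕ} : ∀ {X : ℕ}, (∀ v, X.testBit (32 * v + 31) = false) → ∀ v < n,
    (∀ i < 31, X.testBit (32 * v + i) = false) →
    (X + lanes (2 ^ 31 - 1) n).testBit (32 * v + 31) = false := by
  induction n with
  | zero => intro X _ v hv; omega
  | succ n ih =>
    intro X hX v hv h
    have hx : X % 2 ^ 32 < 2 ^ 31 := by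
      refine Nat.lt_pow_two_of_testBit _ fun i hi => ?_
      rw [Nat.testBit_mod_two_pow]
      by_cases h32 : i < 32
      · have : i = 31 := by omega
        subst this
        simpa using hX 0
      · simp [h32]
    have hd := Nat.div_add_mod X (2 ^ 32)
    have e : X + lanes (2 ^ 31 - 1) (n + 1) =
        2 ^ 32 * (X / 2 ^ 32 + lanes (2 ^ 31 - 1) n) + (X % 2 ^ 32 + (2 ^ 31 - 1)) := by
      simp only [lanes]; omega
    have hlt : X % 2 ^ 32 + (2 ^ 31 - 1) < 2 ^ 32 := by omega
    rw [e, Nat.testBit_two_pow_mul_add _ hlt]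
    rcases v with _ | v
    · have h0 : X % 2 ^ 32 = 0 := by
        refine Nat.eq_of_testBit_eq fun i => ?_
        rw [Nat.testBit_mod_two_pow, Nat.zero_testBit]
        by_cases h31 : i < 31
        · have := h i h31
          simp only [Nat.mul_zero, Nat.zero_add] at this
          simp [this]
        · by_cases h32 : i < 32
          · have : i = 31 := by omega
            subst this
            simpa using hX 0
          · simp [h32]
      rw [h0, if_pos (by norm_num)]
      decide
    · rw [if_neg (by omega)]
      have e2 : 32 * (v + 1) + 31 - 32 = 32 * v + 31 := by omega
      rw [e2]
      refine ih (fun w => ?_) v (by omega) (fun i hi => ?_)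
      · rw [Nat.testBit_div_two_pow]
        have := hX (w + 1)
        rwa [show 32 * (w + 1) + 31 = 32 * w + 31 + 32 by ring] at this
      · rw [Nat.testBit_div_two_pow]
        have := h i hi
        rwa [show 32 * (v + 1) + i = 32 * v + i + 32 by ring] at this

theorem nkC_eq : nkC = lanes (2 ^ 31 - 1) 32 := by decide +kernel

theorem onesC_eq : onesC = lanes 1 32 := by decide +kernel

theorem nkC_bit (v : ℕ) : nkC.testBit (32 * v + 31) = false := by
  by_cases hv : v < 32
  · have : ∀ v < 32, nkC.testBit (32 * v + 31) = false := by decide +kernel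
    exact this v hv
  · have b : nkC < 2 ^ 1024 := by decide +kernel
    exact Nat.testBit_lt_two_pow
      (lt_of_lt_of_le b (Nat.pow_le_pow_right (by norm_num) (by omega)))

theorem deadB_bit {N v : ℕ} (hv : v < 32)
    (h : ∀ i < 32, N.testBit (1024 + (32 * v + i)) = false) :
    (deadB N).testBit (32 * v + 31) = false := by
  have e : deadB N = ((((N >>> 1024) &&& nkC) + nkC) &&& kC) := rfl
  rw [e, Nat.testBit_and]
  have : (((N >>> 1024) &&& nkC) + nkC).testBit (32 * v + 31) = false := by
    conv_lhs => rw [show ((N >>> 1024) &&& nkC) + nkC =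
      ((N >>> 1024) &&& nkC) + lanes (2 ^ 31 - 1) 32 by rw [← nkC_eq]]
    refine lane_add (fun w => ?_) v hv (fun i hi => ?_)
    · rw [Nat.testBit_and, nkC_bit, Bool.and_false]
    · rw [Nat.testBit_and, Nat.testBit_shiftRight, h i (by omega), Bool.false_and]
  rw [this, Bool.false_and]

theorem kC_bit : ∀ v < 32, kC.testBit (32 * v + 31) = true := by decide +kernel

theorem lane_xor {v u i : ℕ} (hi : i < 32) :
    (32 * v + i) ^^^ (32 * u) = 32 * (v ^^^ u) + i := by
  refine Nat.eq_of_testBit_eq fun j => ?_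
  have e : ∀ a b : ℕ, b < 32 → (32 * a + b).testBit j =
      if j < 5 then b.testBit j else a.testBit (j - 5) := fun a b hb =>
    Nat.testBit_two_pow_mul_add (i := 5) a hb j
  have e0 := e u 0 (by norm_num)
  rw [Nat.add_zero] at e0
  rw [Nat.testBit_xor, e _ _ hi, e _ _ hi, e0]
  split_ifs <;> simp

theorem hi_xor {v u : ℕ} (hv : v < 32) (hu : u < 32) : (32 + v) ^^^ u = 32 + (v ^^^ u) := by
  have : ∀ v < 32, ∀ u < 32, (32 + v) ^^^ u = 32 + (v ^^^ u) := by decide +kernel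
  exact this v hv u hu

theorem xor_lt {v u : ℕ} (hv : v < 32) (hu : u < 32) : v ^^^ u < 32 :=
  Nat.xor_lt_two_pow (n := 5) hv hu

theorem rep_xor (l j : ℕ) : 2 ^ l * (2 * j + 1) = (2 ^ l * (2 * j)) ^^^ (2 ^ l * 1) := by
  have h1 : 2 * j + 1 = (2 * j) ^^^ 1 := by
    refine Nat.eq_of_testBit_eq fun i => ?_
    rw [Nat.testBit_xor]
    have := Nat.testBit_two_pow_mul_add (i := 1) j (b := 1) (by norm_num) i
    have h2 := Nat.testBit_two_pow_mul_add (i := 1) j (b := 0) (by norm_num) i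
    simp only [pow_one, Nat.add_zero] at this h2
    rw [this, h2]
    rcases i with _ | i
    · simp
    · simp [Nat.testBit_succ]
  rw [h1]
  simp only [Nat.mul_comm (2 ^ l), ← Nat.shiftLeft_eq, Nat.shiftLeft_xor_distrib]

/-- Data about a putative solution, in coordinates. -/
structure Putative (f α : ℕ → ℕ) : Prop where
  lt : ∀ x, f x < 32
  add : ∀ x y, f (x ^^^ y) = f x ^^^ f y
  inj : ∀ x y, x < 32 → y < 32 → 0 < x → 0 < y → α x = α y → x = y
  ne : ∀ x, 0 < x → x < 32 → f x ≠ 0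
  val : ∀ x a, 0 < x → x < 32 → 0 < a → a < 32 → f x = opN x a → α x = a

/-- The number `N` is sound for the coset `2^l * j + {0, …, 2^l - 1}`. -/
def LaneInv (f α : ℕ → ℕ) (l j N : ℕ) : Prop :=
  (∀ i < 32, N.testBit (32 * f (2 ^ l * j) + i) = true → ∃ y < 32, y / 2 ^ l = j ∧ α y = i + 1) ∧
  ∀ i < 32, N.testBit (1024 + (32 * f (2 ^ l * j) + i)) = false

def LaneInvL (f α : ℕ → ℕ) (l : ℕ) : ℕ → List ℕ → Prop
  | _, [] => True
  | j, N :: L => LaneInv f α l j N ∧ LaneInvL f α l (j + 1) L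

section
variable {f α : ℕ → ℕ}

theorem LaneInv.alive (hp : Putative f α) {l j N : ℕ} (h : LaneInv f α l j N) : deadB N ≠ kC := by
  intro e
  have := deadB_bit (hp.lt _) h.2
  rw [e, kC_bit _ (hp.lt _)] at this
  exact absurd this (by simp)

theorem pos_of_div {y l j : ℕ} (h : y / 2 ^ l = j) (hj : 0 < j) : 0 < y := by
  rcases Nat.eq_zero_or_pos y with h0 | h0
  · rw [h0, Nat.zero_div] at h; omega
  · exact h0

theorem LaneInv.mark (hp : Putative f α) {l j N bc : ℕ} (hj : 2 ≤ j) (h : LaneInv f α l j N)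
    (hbc : ∀ i, bc.testBit i = true → ∃ y < 32, y / 2 ^ l = 1 ∧ α y = i % 32 + 1) :
    LaneInv f α l j (mark bc N) := by
  have e : _root_.mark bc N = N ||| ((N &&& bc) <<< 1024) := rfl
  have hv := hp.lt (2 ^ l * j)
  constructor
  · intro i hi hb
    rw [e, Nat.testBit_or, Nat.testBit_shiftLeft] at hb
    have : ¬ (1024 ≤ 32 * f (2 ^ l * j) + i) := by omega
    simp only [ge_iff_le, this, decide_false, Bool.false_and, Bool.or_false] at hb
    exact h.1 i hi hb
  · intro i hi
    rw [e, Nat.testBit_or, h.2 i hi, Bool.false_or, Nat.testBit_shiftLeft,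
      Nat.add_sub_cancel_left, Nat.testBit_and]
    by_contra hc
    simp only [Bool.not_eq_false, Bool.and_eq_true] at hc
    obtain ⟨_, h1, h2⟩ := hc
    obtain ⟨y, hy, hyj, hya⟩ := h.1 i hi h1
    obtain ⟨z, hz, hzj, hza⟩ := hbc _ h2
    rw [Nat.mul_add_mod, Nat.mod_eq_of_lt hi] at hza
    have := hp.inj y z hy hz (pos_of_div hyj (by omega)) (pos_of_div hzj (by omega))
      (hya.trans hza.symm)
    subst this
    omega

theorem LaneInv.perm (hp : Putative f α) {l j N p : ℕ}
    (h : LaneInv f α l (2 * j + 1) N)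
    (hpm : ∀ i, p.testBit i = true → N.testBit (i ^^^ (32 * f (2 ^ l * 1))) = true) :
    (∀ i < 32, p.testBit (32 * f (2 ^ l * (2 * j)) + i) = true →
      ∃ y < 32, y / 2 ^ l = 2 * j + 1 ∧ α y = i + 1) ∧
    ∀ i < 32, p.testBit (1024 + (32 * f (2 ^ l * (2 * j)) + i)) = false := by
  have e := hp.add (2 ^ l * (2 * j)) (2 ^ l * 1)
  rw [← rep_xor] at e
  constructor
  · intro i hi hb
    have := hpm _ hb
    rw [lane_xor hi, ← e] at this
    exact h.1 i hi this
  · intro i hi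
    by_contra hc
    rw [Bool.not_eq_false] at hc
    have := hpm _ hc
    rw [show 1024 + (32 * f (2 ^ l * (2 * j)) + i) = 32 * (32 + f (2 ^ l * (2 * j))) + i by ring,
      lane_xor hi, hi_xor (hp.lt _) (hp.lt _), ← e,
      show 32 * (32 + f (2 ^ l * (2 * j + 1))) + i = 1024 + (32 * f (2 ^ l * (2 * j + 1)) + i) by
        ring, h.2 i hi] at this
    exact absurd this (by simp)

theorem LaneInv.merge (hp : Putative f α) {l j N p : ℕ} (hj : 1 ≤ j) (h : LaneInv f α l (2 * j) N)
    (h1 : ∀ i < 32, p.testBit (32 * f (2 ^ l * (2 * j)) + i) = true →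
      ∃ y < 32, y / 2 ^ l = 2 * j + 1 ∧ α y = i + 1)
    (h2 : ∀ i < 32, p.testBit (1024 + (32 * f (2 ^ l * (2 * j)) + i)) = false) :
    LaneInv f α (l + 1) j (merge N p) := by
  have e : _root_.merge N p = (N ||| p) ||| (((N &&& p) &&& lowC) <<< 1024) := rfl
  have hv := hp.lt (2 ^ l * (2 * j))
  have e2 : 2 ^ (l + 1) * j = 2 ^ l * (2 * j) := by ring
  have hdiv : ∀ y : ℕ, y / 2 ^ (l + 1) = y / 2 ^ l / 2 := fun y => by
    rw [pow_succ, Nat.div_div_eq_div_mul]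
  unfold LaneInv
  rw [e2]
  constructor
  · intro i hi hb
    rw [e, Nat.testBit_or, Nat.testBit_shiftLeft] at hb
    have : ¬ (1024 ≤ 32 * f (2 ^ l * (2 * j)) + i) := by omega
    simp only [ge_iff_le, this, decide_false, Bool.false_and, Bool.or_false, Nat.testBit_or,
      Bool.or_eq_true] at hb
    rcases hb with hb | hb
    · obtain ⟨y, hy, hyj, hya⟩ := h.1 i hi hb
      exact ⟨y, hy, by rw [hdiv]; omega, hya⟩
    · obtain ⟨y, hy, hyj, hya⟩ := h1 i hi hb
      exact ⟨y, hy, by rw [hdiv]; omega, hya⟩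
  · intro i hi
    rw [e, Nat.testBit_or, Nat.testBit_or, h.2 i hi, h2 i hi, Bool.false_or, Bool.false_or,
      Nat.testBit_shiftLeft, Nat.add_sub_cancel_left, Nat.testBit_and, Nat.testBit_and]
    by_contra hc
    simp only [Bool.not_eq_false, Bool.and_eq_true] at hc
    obtain ⟨_, ⟨h3, h4⟩, _⟩ := hc
    obtain ⟨y, hy, hyj, hya⟩ := h.1 i hi h3
    obtain ⟨z, hz, hzj, hza⟩ := h1 i hi h4
    have := hp.inj y z hy hz (pos_of_div hyj (by omega)) (pos_of_div hzj (by omega))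
      (hya.trans hza.symm)
    subst this
    omega

theorem mergeL_sound (hp : Putative f α) {l bc : ℕ}
    (hbc : ∀ i, bc.testBit i = true → ∃ y < 32, y / 2 ^ l = 1 ∧ α y = i % 32 + 1) :
    ∀ (L : List ℕ) (c : List ℕ → Bool) (j : ℕ), 1 ≤ j → LaneInvL f α l (2 * j) L →
      mergeL (f (2 ^ l * 1)) bc L c = true → ∃ R, LaneInvL f α (l + 1) j R ∧ c R = true
  | [], c, j, _, _, h => ⟨[], trivial, h⟩
  | [_], c, j, _, _, h => by simp [mergeL] at h
  | N :: N' :: L, c, j, hj, hL, h => by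
    obtain ⟨hN, hN', hL⟩ := hL
    unfold mergeL at h
    have hm := hN.mark hp (by omega) hbc
    have h := (prune_sound h).resolve_left (hm.alive hp)
    obtain ⟨p, hpm, h⟩ := perm_sound (hp.lt _) h
    rw [force_eq] at h
    have hP := hN'.perm hp hpm
    -- marking the permuted number
    have e : _root_.mark bc p = p ||| ((p &&& bc) <<< 1024) := rfl
    have hv := hp.lt (2 ^ l * (2 * j))
    have hP1 : ∀ i < 32, (_root_.mark bc p).testBit (32 * f (2 ^ l * (2 * j)) + i) = true →
        ∃ y < 32, y / 2 ^ l = 2 * j + 1 ∧ α y = i + 1 := by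
      intro i hi hb
      rw [e, Nat.testBit_or, Nat.testBit_shiftLeft] at hb
      have : ¬ (1024 ≤ 32 * f (2 ^ l * (2 * j)) + i) := by omega
      simp only [ge_iff_le, this, decide_false, Bool.false_and, Bool.or_false] at hb
      exact hP.1 i hi hb
    have hP2 : ∀ i < 32,
        (_root_.mark bc p).testBit (1024 + (32 * f (2 ^ l * (2 * j)) + i)) = false := by
      intro i hi
      rw [e, Nat.testBit_or, hP.2 i hi, Bool.false_or, Nat.testBit_shiftLeft,
        Nat.add_sub_cancel_left, Nat.testBit_and]
      by_contra hc
      simp only [Bool.not_eq_false, Bool.and_eq_true] at hc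
      obtain ⟨_, h1, h2⟩ := hc
      obtain ⟨y, hy, hyj, hya⟩ := hP.1 i hi h1
      obtain ⟨z, hz, hzj, hza⟩ := hbc _ h2
      rw [Nat.mul_add_mod, Nat.mod_eq_of_lt hi] at hza
      have := hp.inj y z hy hz (pos_of_div hyj (by omega)) (pos_of_div hzj (by omega))
        (hya.trans hza.symm)
      subst this
      omega
    have hg := hm.merge hp hj hP1 hP2
    have h := (prune_sound h).resolve_left (hg.alive hp)
    obtain ⟨R, hR, hc⟩ := mergeL_sound hp hbc L _ (j + 1) (by omega)
      (by rwa [show 2 * (j + 1) = 2 * j + 1 + 1 by ring]) h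
    exact ⟨_ :: R, ⟨hg, hR⟩, hc⟩

theorem loop_sound {P : ℕ → Bool} {u : ℕ} (fuel : ℕ) : ∀ live : ℕ,
    live.testBit (32 * u + 31) = true → loop P fuel live = true → P u = true := by
  induction fuel with
  | zero => intro live _ h; exact absurd h (by simp [loop])
  | succ n ih =>
    intro live hu h
    have e : loop P (n + 1) live = bif Nat.beq (live >>> 31) 0 then true else
      force (laneOf (live >>> 31)) fun u =>
        bif P u then force (live ^^^ 2 ^ (32 * u + 31)) (loop P n) else false := rfl
    rw [e] at h
    cases hb : Nat.beq (live >>> 31) 0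
    · rw [hb, cond_false, force_eq] at h
      generalize laneOf (live >>> 31) = w at h
      cases hw : P w
      · rw [hw, cond_false] at h; exact absurd h (by simp)
      · rw [hw, cond_true, force_eq] at h
        by_cases hwu : w = u
        · rwa [← hwu]
        · refine ih _ ?_ h
          rw [Nat.testBit_xor, hu, Nat.testBit_two_pow_of_ne (by omega)]
          rfl
    · have h0 := Nat.eq_of_beq_eq_true hb
      have h1 : (live >>> 31).testBit (32 * u) = true := by
        rw [Nat.testBit_shiftRight, Nat.add_comm]; exact hu
      rw [h0] at h1
      simp at h1

theorem branch_sound (hp : Putative f α) {l N : ℕ} {L : List ℕ} {c : List ℕ → Bool}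
    (hL : LaneInvL f α l 1 (N :: L)) (h : branch N L c (f (2 ^ l * 1)) = true) :
    ∃ R, LaneInvL f α (l + 1) 1 R ∧ c R = true := by
  unfold branch at h
  rw [force_eq] at h
  refine mergeL_sound hp (fun i hi => ?_) L c 1 le_rfl hL.2 h
  have e : Nat.mul (Nat.mod (Nat.shiftRight N (Nat.mul 32 (f (2 ^ l * 1)))) 4294967296) onesC =
      (N >>> (32 * f (2 ^ l * 1)) % 2 ^ 32) * lanes 1 32 := by rw [← onesC_eq]; rfl
  rw [e] at hi
  have h1 := lanes_mul_bit (Nat.mod_lt _ (by norm_num)) _ _ hi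
  rw [Nat.testBit_mod_two_pow, Nat.testBit_shiftRight, Bool.and_eq_true] at h1
  exact hL.1.1 _ (Nat.mod_lt _ (by norm_num)) h1.2

theorem search_sound (hp : Putative f α) (n : ℕ) : ∀ (l : ℕ) (L : List ℕ),
    LaneInvL f α l 1 L → search n L = true → False := by
  induction n with
  | zero => intro l L _ h; exact absurd h (by simp [search])
  | succ n ih =>
    intro l L hL h
    rcases L with _ | ⟨N, L⟩
    · exact absurd h (by simp [search])
    · have e : search (n + 1) (N :: L) = force (tagged (deadB N ^^^ kC)) fun live =>
        loop (branch N L (search n)) 33 live := rfl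
      rw [e, force_eq] at h
      have hb : (tagged (deadB N ^^^ kC)).testBit (32 * f (2 ^ l * 1) + 31) = true := by
        have e2 : tagged (deadB N ^^^ kC) =
          (deadB N ^^^ kC) ||| ((deadB N ^^^ kC) % 2147483647) := rfl
        rw [e2, Nat.testBit_or, Nat.testBit_xor, deadB_bit (hp.lt _) hL.1.2, kC_bit _ (hp.lt _)]
        rfl
      obtain ⟨R, hR, hc⟩ := branch_sound hp hL (loop_sound _ _ hb h)
      exact ih _ _ hR hc

theorem row_bit (x : ℕ) {k : ℕ} (n : ℕ) (h : (row x n).testBit k = true) :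
    k = 1024 ∨ ∃ i < n, k = 32 * opN x (i + 1) + i := by
  induction n with
  | zero =>
    have e : row x 0 = 2 ^ 1024 := rfl
    rw [e, Nat.testBit_two_pow] at h
    left; exact (of_decide_eq_true h).symm
  | succ n ih =>
    have e : row x (n + 1) = row x n ||| 2 ^ (32 * opN x (n + 1) + n) := rfl
    rw [e, Nat.testBit_or, Bool.or_eq_true, Nat.testBit_two_pow] at h
    rcases h with h | h
    · rcases ih h with h | ⟨i, hi, h⟩
      · exact Or.inl h
      · exact Or.inr ⟨i, by omega, h⟩
    · right
      exact ⟨n, by omega, (of_decide_eq_true h).symm⟩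

theorem opN_lt : ∀ x < 32, ∀ y < 32, opN x y < 32 := by decide +kernel

theorem row_inv (hp : Putative f α) {x : ℕ} (h0 : 0 < x) (hx : x < 32) :
    LaneInv f α 0 x (row x 31) := by
  have hv := hp.lt x
  unfold LaneInv
  simp only [pow_zero, Nat.one_mul, Nat.div_one]
  constructor
  · intro i hi hb
    rcases row_bit x 31 hb with h | ⟨k, hk, h⟩
    · omega
    · have hi' : i = k := by omega
      subst hi'
      exact ⟨x, hx, rfl, hp.val x (i + 1) h0 hx (by omega) (by omega) (by omega)⟩
  · intro i hi
    by_contra hc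
    rw [Bool.not_eq_false] at hc
    rcases row_bit x 31 hc with h | ⟨k, hk, h⟩
    · have := hp.ne x h0 hx
      omega
    · have := opN_lt x hx (k + 1) (by omega)
      omega

theorem rows_sound (hp : Putative f α) : ∀ (n j : ℕ) (c : List ℕ → Bool), 0 < j → j + n ≤ 32 →
    rows (List.range' j n) c = true → ∃ R, LaneInvL f α 0 j R ∧ c R = true
  | 0, j, c, _, _, h => ⟨[], trivial, h⟩
  | n + 1, j, c, hj, hn, h => by
    rw [List.range'_succ] at h
    unfold rows at h
    rw [force_eq] at h
    obtain ⟨R, hR, hc⟩ := rows_sound hp n (j + 1) _ (by omega) (by omega) h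
    exact ⟨_ :: R, ⟨row_inv hp hj (by omega), hR⟩, hc⟩

theorem core (hp : Putative f α) (h1 : f 1 ∈ [1, 25, 24, 31, 30, 26, 27]) : False := by
  obtain ⟨R, hR, hc⟩ := rows_sound hp 31 1 _ (by norm_num) (by norm_num) top_true
  rcases R with _ | ⟨N, L⟩
  · simp [top] at hc
  · unfold top at hc
    have hb : liveC.testBit (32 * f (2 ^ 0 * 1) + 31) = true := by
      have : ∀ v ∈ [1, 25, 24, 31, 30, 26, 27], liveC.testBit (32 * v + 31) = true := by
        decide +kernel
      exact this _ h1
    obtain ⟨R, hR, hc⟩ := branch_sound hp hR (loop_sound _ _ hb hc)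
    exact search_sound hp _ _ _ hR hc

end

/-! ### Transfer to the field -/

section
variable {F : Type*} [Field F]

set_option maxRecDepth 100000 in
theorem exists_root [Fintype F] (hF : Fintype.card F = 32) (h2 : (2 : F) = 0) :
    ∃ t : F, t ^ 5 + t ^ 2 + 1 = 0 := by
  by_contra hc
  push Not at hc
  let Q : Polynomial F := Polynomial.X ^ 27 + Polynomial.X ^ 24 + Polynomial.X ^ 22 + Polynomial.X ^ 21 + Polynomial.X ^ 18 + Polynomial.X ^ 17 + Polynomial.X ^ 16 + Polynomial.X ^ 15 + Polynomial.X ^ 14 + Polynomial.X ^ 10 + Polynomial.X ^ 9 + Polynomial.X ^ 7 + Polynomial.X ^ 6 + Polynomial.X ^ 5 + Polynomial.X ^ 3 + Polynomial.X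
  have hd : Q.natDegree = 27 := by
    simp only [Q]
    compute_degree!
  have hQ : Q = 0 := by
    refine Polynomial.eq_zero_of_natDegree_lt_card_of_eval_eq_zero Q
      (f := fun x : F => x) (fun _ _ h => h) (fun x => ?_) (by rw [hF, hd]; norm_num)
    have hx : x ^ 32 = x := by rw [← hF]; exact FiniteField.pow_card x
    have hm : (x ^ 5 + x ^ 2 + 1) * (x ^ 27 + x ^ 24 + x ^ 22 + x ^ 21 + x ^ 18 + x ^ 17 + x ^ 16 + x ^ 15 + x ^ 14 + x ^ 10 + x ^ 9 + x ^ 7 + x ^ 6 + x ^ 5 + x ^ 3 + x) = 0 := by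
      linear_combination hx + (x + (x ^ 29 + x ^ 27 + x ^ 26 + x ^ 24 + x ^ 23 + x ^ 22 + x ^ 21 + x ^ 20 + x ^ 19 + x ^ 18 + x ^ 17 + x ^ 16 + x ^ 15 + x ^ 14 + x ^ 12 + x ^ 11 + x ^ 10 + x ^ 9 + x ^ 8 + x ^ 7 + x ^ 6 + x ^ 5 + x ^ 3)) * h2
    have := (mul_eq_zero.mp hm).resolve_left (hc x)
    simpa [Q] using this
  rw [hQ] at hd
  simp at hd

/-- Bit `i` of `n`, as an element of the field. -/
def bt (F : Type*) [Field F] (n i : ℕ) : F := if n.testBit i then 1 else 0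

/-- Evaluation of a five-bit number at `t`. -/
def ev (t : F) (n : ℕ) : F :=
  bt F n 0 + bt F n 1 * t + bt F n 2 * t ^ 2 + bt F n 3 * t ^ 3 + bt F n 4 * t ^ 4

theorem bt_xor (h2 : (2 : F) = 0) {x y z i j k : ℕ}
    (h : x.testBit i = (y.testBit j ^^ z.testBit k)) : bt F x i = bt F y j + bt F z k := by
  unfold bt
  rw [h]
  cases y.testBit j <;> cases z.testBit k <;> simp
  linear_combination -h2

theorem bt_eq {x y i j : ℕ} (h : x.testBit i = y.testBit j) : bt F x i = bt F y j := by
  unfold bt; rw [h]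

theorem ev_xor (h2 : (2 : F) = 0) (t : F) (x y : ℕ) : ev t (x ^^^ y) = ev t x + ev t y := by
  unfold ev
  rw [bt_xor h2 (Nat.testBit_xor x y 0), bt_xor h2 (Nat.testBit_xor x y 1),
    bt_xor h2 (Nat.testBit_xor x y 2), bt_xor h2 (Nat.testBit_xor x y 3),
    bt_xor h2 (Nat.testBit_xor x y 4)]
  ring

theorem ev_zero (t : F) : ev t 0 = 0 := by simp [ev, bt]

theorem ev_one (t : F) : ev t 1 = 1 := by
  have h : ∀ i, 1 ≤ i → i < 5 → Nat.testBit 1 i = false := by decide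
  simp [ev, bt, h]

theorem mulX_lt : ∀ n < 32, mulX n < 32 := by decide +kernel

theorem mulX_bits : ∀ n < 32, (mulX n).testBit 0 = n.testBit 4 ∧
    (mulX n).testBit 1 = n.testBit 0 ∧ (mulX n).testBit 2 = (n.testBit 1 ^^ n.testBit 4) ∧
    (mulX n).testBit 3 = n.testBit 2 ∧ (mulX n).testBit 4 = n.testBit 3 := by
  decide +kernel

theorem ev_mulX (h2 : (2 : F) = 0) {t : F} (ht : t ^ 5 + t ^ 2 + 1 = 0) {n : ℕ} (hn : n < 32) :
    ev t (mulX n) = t * ev t n := by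
  obtain ⟨b0, b1, b2, b3, b4⟩ := mulX_bits n hn
  unfold ev
  rw [bt_eq b0, bt_eq b1, bt_xor h2 b2, bt_eq b3, bt_eq b4]
  linear_combination (-bt F n 4) * ht + (bt F n 4 * (1 + t ^ 2)) * h2

theorem ev_bitMul (t : F) (y i x : ℕ) : ev t (bitMul y i x) = bt F y i * ev t x := by
  have e : bitMul y i x = (y >>> i % 2) * x := rfl
  rw [e, Nat.shiftRight_eq_div_pow, ← Nat.toNat_testBit]
  unfold bt
  cases y.testBit i <;> simp [ev_zero]

theorem ev_mulN (h2 : (2 : F) = 0) {t : F} (ht : t ^ 5 + t ^ 2 + 1 = 0) {x : ℕ} (hx : x < 32)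
    (y : ℕ) : ev t (mulN x y) = ev t x * ev t y := by
  have l1 := mulX_lt _ hx
  have l2 := mulX_lt _ l1
  have l3 := mulX_lt _ l2
  have e : mulN x y = bitMul y 0 x ^^^ (bitMul y 1 (mulX x) ^^^ (bitMul y 2 (mulX (mulX x)) ^^^
    (bitMul y 3 (mulX (mulX (mulX x))) ^^^ bitMul y 4 (mulX (mulX (mulX (mulX x))))))) := rfl
  rw [e, ev_xor h2, ev_xor h2, ev_xor h2, ev_xor h2, ev_bitMul, ev_bitMul, ev_bitMul, ev_bitMul,
    ev_bitMul, ev_mulX h2 ht l3, ev_mulX h2 ht l2, ev_mulX h2 ht l1, ev_mulX h2 ht hx]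
  conv_rhs => rw [show ev t y = bt F y 0 + bt F y 1 * t + bt F y 2 * t ^ 2 + bt F y 3 * t ^ 3 +
    bt F y 4 * t ^ 4 from rfl]
  ring

theorem sqN_ok : ∀ n < 32, sqN n = mulN n n ∧ sqN n < 32 ∧
    rootN n = sqN (sqN (sqN (sqN n))) ∧ rootN n < 32 ∧ trN n < 32 ∧
    trN n = n ^^^ (sqN n ^^^ (sqN (sqN n) ^^^ (sqN (sqN (sqN n)) ^^^
      sqN (sqN (sqN (sqN n)))))) := by
  decide +kernel

theorem mulN_ok : ∀ x < 32, ∀ y < 32, mulN x y < 32 ∧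
    trN x * rootN y = mulN (trN x) (rootN y) ∧ (x ≠ 0 → y ≠ 0 → opN x y ≠ 0) := by
  decide +kernel

theorem ev_sqN (h2 : (2 : F) = 0) {t : F} (ht : t ^ 5 + t ^ 2 + 1 = 0) {x : ℕ} (hx : x < 32) :
    ev t (sqN x) = ev t x ^ 2 := by
  rw [(sqN_ok x hx).1, ev_mulN h2 ht hx, sq]

theorem ev_rootN (h2 : (2 : F) = 0) {t : F} (ht : t ^ 5 + t ^ 2 + 1 = 0) {x : ℕ} (hx : x < 32) :
    ev t (rootN x) = ev t x ^ 16 := by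
  have l1 := (sqN_ok x hx).2.1
  have l2 := (sqN_ok _ l1).2.1
  have l3 := (sqN_ok _ l2).2.1
  rw [(sqN_ok x hx).2.2.1, ev_sqN h2 ht l3, ev_sqN h2 ht l2, ev_sqN h2 ht l1, ev_sqN h2 ht hx]
  ring

theorem ev_trN (h2 : (2 : F) = 0) {t : F} (ht : t ^ 5 + t ^ 2 + 1 = 0) {x : ℕ} (hx : x < 32) :
    ev t (trN x) = ev t x + ev t x ^ 2 + ev t x ^ 4 + ev t x ^ 8 + ev t x ^ 16 := by
  have l1 := (sqN_ok x hx).2.1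
  have l2 := (sqN_ok _ l1).2.1
  have l3 := (sqN_ok _ l2).2.1
  rw [(sqN_ok x hx).2.2.2.2.2, ev_xor h2, ev_xor h2, ev_xor h2, ev_xor h2, ev_sqN h2 ht l3,
    ev_sqN h2 ht l2, ev_sqN h2 ht l1, ev_sqN h2 ht hx]
  ring

/-- The trace and the multiplication on the field. -/
def trF (x : F) : F := x + x ^ 2 + x ^ 4 + x ^ 8 + x ^ 16

def opF (x y : F) : F := x * y + trF x * y ^ 16 + trF (x ^ 2 * y)

theorem ev_opN (h2 : (2 : F) = 0) {t : F} (ht : t ^ 5 + t ^ 2 + 1 = 0) {x y : ℕ} (hx : x < 32)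
    (hy : y < 32) : ev t (opN x y) = opF (ev t x) (ev t y) := by
  have e : opN x y = mulN x y ^^^ trN x * rootN y ^^^ trN (mulN (sqN x) y) := rfl
  have l1 := (sqN_ok x hx).2.1
  rw [e, ev_xor h2, ev_xor h2, (mulN_ok x hx y hy).2.1, ev_mulN h2 ht hx,
    ev_mulN h2 ht (sqN_ok x hx).2.2.2.2.1, ev_trN h2 ht hx, ev_rootN h2 ht hy,
    ev_trN h2 ht (mulN_ok _ l1 y hy).1, ev_mulN h2 ht l1, ev_sqN h2 ht hx]
  rfl

theorem inv_ok : ∀ z < 32, z ≠ 0 → ∃ w < 32, mulN z w = 1 := by decide +kernel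

theorem ev_ne (h2 : (2 : F) = 0) {t : F} (ht : t ^ 5 + t ^ 2 + 1 = 0) {z : ℕ} (hz : z < 32)
    (h0 : z ≠ 0) : ev t z ≠ 0 := by
  obtain ⟨w, _, hw⟩ := inv_ok z hz h0
  intro h
  have := ev_mulN h2 ht hz w
  rw [hw, h, ev_one, zero_mul] at this
  exact one_ne_zero this

theorem ev_inj (h2 : (2 : F) = 0) {t : F} (ht : t ^ 5 + t ^ 2 + 1 = 0) {x y : ℕ} (hx : x < 32)
    (hy : y < 32) (h : ev t x = ev t y) : x = y := by
  by_contra hne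
  refine ev_ne h2 ht (xor_lt hx hy) (fun h0 => hne (Nat.xor_eq_zero_iff.mp h0)) ?_
  rw [ev_xor h2, h]
  linear_combination ev t y * h2

theorem ev_surj [Fintype F] (hF : Fintype.card F = 32) (h2 : (2 : F) = 0) {t : F}
    (ht : t ^ 5 + t ^ 2 + 1 = 0) (x : F) : ∃ n < 32, ev t n = x := by
  have hb : Function.Bijective (fun n : Fin 32 => ev t n.1) := by
    rw [Fintype.bijective_iff_injective_and_card]
    refine ⟨fun a b h => Fin.ext (ev_inj h2 ht a.2 b.2 h), ?_⟩
    rw [hF, Fintype.card_fin]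
  obtain ⟨n, hn⟩ := hb.2 x
  exact ⟨n.1, n.2, hn⟩

theorem sq_add' (h2 : (2 : F) = 0) (x y : F) : (x + y) ^ 2 = x ^ 2 + y ^ 2 := by
  linear_combination (x * y) * h2

theorem pow4_add (h2 : (2 : F) = 0) (x y : F) : (x + y) ^ 4 = x ^ 4 + y ^ 4 := by
  have := sq_add' h2 (x ^ 2) (y ^ 2)
  rw [← sq_add' h2 x y] at this
  linear_combination this

theorem pow8_add (h2 : (2 : F) = 0) (x y : F) : (x + y) ^ 8 = x ^ 8 + y ^ 8 := by
  have := sq_add' h2 (x ^ 4) (y ^ 4)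
  rw [← pow4_add h2 x y, ← pow_mul, ← pow_mul, ← pow_mul] at this
  exact this

theorem pow16_add (h2 : (2 : F) = 0) (x y : F) : (x + y) ^ 16 = x ^ 16 + y ^ 16 := by
  have := sq_add' h2 (x ^ 8) (y ^ 8)
  rw [← pow8_add h2 x y, ← pow_mul, ← pow_mul, ← pow_mul] at this
  exact this

theorem trF_add (h2 : (2 : F) = 0) (x y : F) : trF (x + y) = trF x + trF y := by
  unfold trF
  rw [sq_add' h2, pow4_add h2, pow8_add h2, pow16_add h2]
  ring

theorem opF_add (h2 : (2 : F) = 0) (x y z : F) : opF x (y + z) = opF x y + opF x z := by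
  unfold opF
  rw [mul_add (x ^ 2), trF_add h2, pow16_add h2]
  ring

theorem trF_sq (h2 : (2 : F) = 0) (x : F) : trF (x ^ 2) = trF x ^ 2 := by
  unfold trF
  rw [sq_add' h2, sq_add' h2, sq_add' h2, sq_add' h2]
  ring

theorem opF_sq (h2 : (2 : F) = 0) (x y : F) : opF (x ^ 2) (y ^ 2) = opF x y ^ 2 := by
  unfold opF
  rw [sq_add' h2, sq_add' h2, mul_pow, mul_pow, ← trF_sq h2, ← trF_sq h2, mul_pow]
  ring

theorem opF_cancel [Fintype F] (hF : Fintype.card F = 32) (h2 : (2 : F) = 0) {t : F}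
    (ht : t ^ 5 + t ^ 2 + 1 = 0) {x a b : F} (hx : x ≠ 0) (h : opF x a = opF x b) : a = b := by
  by_contra hne
  have h0 : opF x (a + b) = 0 := by
    rw [opF_add h2, h]; linear_combination opF x b * h2
  obtain ⟨n, hn, rfl⟩ := ev_surj hF h2 ht x
  obtain ⟨m, hm, hm'⟩ := ev_surj hF h2 ht (a + b)
  rw [← hm', ← ev_opN h2 ht hn hm] at h0
  have hn0 : n ≠ 0 := by rintro rfl; exact hx (ev_zero t)
  have hm0 : m ≠ 0 := by
    rintro rfl
    rw [ev_zero] at hm'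
    exact hne (by linear_combination -hm' - b * h2)
  exact ev_ne h2 ht (opN_lt n hn m hm) ((mulN_ok n hn m hm).2.2 hn0 hm0) h0

/-- A putative solution on the field. -/
structure Sol (f α : F → F) : Prop where
  add : ∀ x y, f (x + y) = f x + f y
  ne : ∀ x, x ≠ 0 → α x ≠ 0
  eq : ∀ x, x ≠ 0 → f x = opF x (α x)
  inj : ∀ x y, x ≠ 0 → y ≠ 0 → α x = α y → x = y

theorem Sol.frob [Fintype F] (hF : Fintype.card F = 32) (h2 : (2 : F) = 0) {f α : F → F}
    (h : Sol f α) : Sol (fun x => f (x ^ 16) ^ 2) (fun x => α (x ^ 16) ^ 2) := by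
  have h32 : ∀ x : F, x ^ 32 = x := fun x => by rw [← hF]; exact FiniteField.pow_card x
  have hr : ∀ x : F, (x ^ 16) ^ 2 = x := fun x => by rw [← pow_mul]; exact h32 x
  have hr' : ∀ x : F, (x ^ 2) ^ 16 = x := fun x => by rw [← pow_mul]; exact h32 x
  refine ⟨fun x y => ?_, fun x hx => ?_, fun x hx => ?_, fun x y hx hy hxy => ?_⟩
  · show f ((x + y) ^ 16) ^ 2 = f (x ^ 16) ^ 2 + f (y ^ 16) ^ 2
    rw [pow16_add h2, h.add, sq_add' h2]
  · exact pow_ne_zero _ (h.ne _ (pow_ne_zero _ hx))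
  · show f (x ^ 16) ^ 2 = opF x (α (x ^ 16) ^ 2)
    rw [h.eq _ (pow_ne_zero _ hx), ← opF_sq h2, hr]
  · have h1 : α (x ^ 16) = α (y ^ 16) := by
      rw [← hr' (α (x ^ 16)), ← hr' (α (y ^ 16))]
      exact congrArg (· ^ 16) hxy
    have h3 := h.inj _ _ (pow_ne_zero _ hx) (pow_ne_zero _ hy) h1
    rw [← hr x, ← hr y, h3]

theorem Sol.putative [Fintype F] (hF : Fintype.card F = 32) (h2 : (2 : F) = 0) {t : F}
    (ht : t ^ 5 + t ^ 2 + 1 = 0) {f α : F → F} (h : Sol f α) {d : F → ℕ} (hd : ∀ x, d x < 32)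
    (hed : ∀ x, ev t (d x) = x) :
    Putative (fun n => d (f (ev t n))) (fun n => d (α (ev t n))) := by
  have hde : ∀ n < 32, d (ev t n) = n := fun n hn => ev_inj h2 ht (hd _) hn (hed _)
  have hdinj : ∀ x y, d x = d y → x = y := fun x y hxy => by rw [← hed x, hxy, hed]
  refine ⟨fun x => hd _, fun x y => ?_, fun x y hx hy hx0 hy0 hxy => ?_, fun x hx0 hx h0 => ?_,
    fun x a hx0 hx ha0 ha hv => ?_⟩
  · refine ev_inj h2 ht (hd _) (xor_lt (hd _) (hd _)) ?_
    show ev t (d (f (ev t (x ^^^ y)))) = ev t (d (f (ev t x)) ^^^ d (f (ev t y)))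
    rw [hed, ev_xor h2, ev_xor h2, h.add, hed, hed]
  · exact ev_inj h2 ht hx hy (h.inj _ _ (ev_ne h2 ht hx (by omega)) (ev_ne h2 ht hy (by omega))
      (hdinj _ _ hxy))
  · have hx' := ev_ne h2 ht hx (by omega)
    have h1 : f (ev t x) = 0 := by rw [← hed (f (ev t x)), h0, ev_zero]
    rw [h.eq _ hx'] at h1
    have h3 : opF (ev t x) 0 = 0 := by simp [opF, trF]
    exact h.ne _ hx' (opF_cancel hF h2 ht hx' (h1.trans h3.symm))
  · have hx' := ev_ne h2 ht hx (by omega)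
    have h1 : f (ev t x) = opF (ev t x) (ev t a) := by
      rw [← ev_opN h2 ht hx ha, ← hv, hed]
    rw [h.eq _ hx'] at h1
    show d (α (ev t x)) = a
    rw [opF_cancel hF h2 ht hx' h1, hde a ha]

theorem orb_op : ∀ n < 32, n ∈ [1, 2, 3, 6, 7, 8, 9] →
    opN 1 n ∈ [1, 25, 24, 31, 30, 26, 27] := by
  decide +kernel

theorem orb_ok : ∀ n < 32, n ≠ 0 → ∃ k < 5, sqN^[k] n ∈ [1, 2, 3, 6, 7, 8, 9] := by
  decide +kernel

theorem Sol.false_of_iter [Fintype F] (hF : Fintype.card F = 32) (h2 : (2 : F) = 0) {t : F}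
    (ht : t ^ 5 + t ^ 2 + 1 = 0) {d : F → ℕ} (hd : ∀ x, d x < 32) (hed : ∀ x, ev t (d x) = x)
    (k : ℕ) : ∀ (n : ℕ) (f α : F → F), n < 32 → sqN^[k] n ∈ [1, 2, 3, 6, 7, 8, 9] → Sol f α →
      α 1 = ev t n → False := by
  induction k with
  | zero =>
    intro n f α hn ho h h1
    refine core (h.putative hF h2 ht hd hed) ?_
    have e : d (f (ev t 1)) = opN 1 n := by
      refine ev_inj h2 ht (hd _) (opN_lt 1 (by norm_num) n hn) ?_
      rw [hed, ev_opN h2 ht (by norm_num) hn, ev_one, ← h1, h.eq 1 one_ne_zero]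
    show d (f (ev t 1)) ∈ _
    rw [e]
    exact orb_op n hn ho
  | succ k ih =>
    intro n f α hn ho h h1
    refine ih (sqN n) _ _ (sqN_ok n hn).2.1 ho (h.frob hF h2) ?_
    show α (1 ^ 16) ^ 2 = _
    rw [one_pow, h1, ev_sqN h2 ht hn]

theorem Sol.absurd [Fintype F] (hF : Fintype.card F = 32) (h2 : (2 : F) = 0) {t : F}
    (ht : t ^ 5 + t ^ 2 + 1 = 0) {f α : F → F} (h : Sol f α) : False := by
  choose d hd hed using ev_surj hF h2 ht
  have h0 : d (α 1) ≠ 0 := fun h0 => by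
    have := hed (α 1)
    rw [h0, ev_zero] at this
    exact h.ne 1 one_ne_zero this.symm
  obtain ⟨k, _, hk⟩ := orb_ok _ (hd (α 1)) h0
  exact Sol.false_of_iter hF h2 ht hd hed k _ f α (hd _) hk h (hed _).symm

end

/-- There is no translation hyperoval of type (a) in the symplectic Knuth presemifield
plane `Π(K₅^{td})` of order `32`: there is no `F₂`-linear (i.e. additive) bijection
`f : F₃₂ → F₃₂` such that for every nonzero `a` the set `{x : f(x) + x∘a = 0}` has
exactly `2` elements, where `x ∘ y = xy + Tr(x)·y¹⁶ + Tr(x²y)` and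
`Tr(x) = x + x² + x⁴ + x⁸ + x¹⁶`. -/
theorem no_type_a_hyperoval_K5td
    {F : Type*} [Field F] [Fintype F] (hF : Fintype.card F = 32)
    (Tr : F → F) (hTr : ∀ x : F, Tr x = x + x ^ 2 + x ^ 4 + x ^ 8 + x ^ 16)
    (smul : F → F → F)
    (hsmul : ∀ x y : F, smul x y = x * y + Tr x * y ^ 16 + Tr (x ^ 2 * y)) :
    ¬ ∃ f : F → F, Function.Bijective f ∧ (∀ x y : F, f (x + y) = f x + f y) ∧
      ∀ a : F, a ≠ 0 → ({x : F | f x + smul x a = 0}).ncard = 2 := by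
  rintro ⟨f, -, hadd, hker⟩
  have h2 : (2 : F) = 0 := by
    have h32 : ((Fintype.card F : ℕ) : F) = 0 := Nat.cast_card_eq_zero F
    rw [hF] at h32
    have : (2 : F) ^ 5 = 0 := by
      rw [← h32]; norm_num
    exact pow_eq_zero_iff (by norm_num) |>.mp this
  obtain ⟨t, ht⟩ := exists_root hF h2
  have hS : ∀ x y, smul x y = opF x y := fun x y => by
    rw [hsmul, hTr, hTr]; rfl
  have hf0 : f 0 = 0 := by
    have := hadd 0 0
    rw [add_zero] at this
    linear_combination -this
  have hex : ∀ a : {a : F // a ≠ 0}, ∃ x : {x : F // x ≠ 0}, f x.1 = opF x.1 a.1 := by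
    rintro ⟨a, ha⟩
    obtain ⟨x, hx, hx0⟩ := Set.exists_ne_of_one_lt_ncard (a := 0)
      (by rw [hker a ha]; norm_num : 1 < ({x : F | f x + smul x a = 0}).ncard)
    refine ⟨⟨x, hx0⟩, ?_⟩
    have hx : f x + smul x a = 0 := hx
    rw [hS] at hx
    show f x = opF x a
    linear_combination hx - opF x a * h2
  choose X hX using hex
  have hXinj : Function.Injective X := fun a b hab => by
    have h1 := hX a
    have h3 := hX b
    rw [← hab] at h3
    exact Subtype.ext (opF_cancel hF h2 ht (X a).2 (h1.symm.trans h3))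
  have hXs : Function.Surjective X := Finite.surjective_of_injective hXinj
  have hα : ∀ x : F, ∃ a : F, x ≠ 0 → ∃ h : a ≠ 0, (X ⟨a, h⟩).1 = x := by
    intro x
    by_cases hx : x = 0
    · exact ⟨0, fun h => absurd hx h⟩
    · obtain ⟨a, ha⟩ := hXs ⟨x, hx⟩
      exact ⟨a.1, fun _ => ⟨a.2, by rw [ha]⟩⟩
  choose α hα using hα
  refine Sol.absurd hF h2 ht (f := f) (α := α) ⟨hadd, fun x hx => (hα x hx).1, fun x hx => ?_,
    fun x y hx hy hxy => ?_⟩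
  · obtain ⟨h, hXx⟩ := hα x hx
    have := hX ⟨α x, h⟩
    rwa [hXx] at this
  · obtain ⟨h, hXx⟩ := hα x hx
    obtain ⟨h', hXy⟩ := hα y hy
    rw [← hXx, ← hXy]
    congr 2
    exact Subtype.ext hxy
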